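/- Let a be a semi-integer (2a ∈ ℤ, a ≠ 0) and let V_i be an irreducible component of the quasi-affine set V^a ⊂ ℂ^{q+2n+1} (with its Zariski topology). If V_i is not contained in D_k = {(r, z, Δ_0, m) ∈ V^a : z_k = 0} for any k = 1, …, n, then V_i has dimension at most n, where the dimension of an irreducible quasi-affine set is the supremum of the lengths d of chains Z_0 ⊊ Z_1 ⊊ ⋯ ⊊ Z_d of nonempty irreducible closed subsets. -/

import Mathlib

/-- Index type for the mutual-distance variables `R_{ij}`, `1 ≤ i < j ≤ n`. -/
abbrev PairIdx (n : ℕ) := {p : Fin n × Fin n // p.1 < p.2}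

/-- The polynomial `R_{ij}` (for an unordered pair `{i,j}`; junk value `0` if `i = j`). -/
noncomputable def Rvar {n : ℕ} (i j : Fin n) : MvPolynomial (PairIdx n) ℂ :=
  if h : i < j then MvPolynomial.X ⟨(i, j), h⟩
  else if h' : j < i then MvPolynomial.X ⟨(j, i), h'⟩ else 0

/-- The polynomial Cayley–Menger matrix `A(R)` over `ℂ[R_{12}, …, R_{(n−1)n}]`. -/
noncomputable def cmPolyMatrix (n : ℕ) :
    Matrix (Fin (n + 1)) (Fin (n + 1)) (MvPolynomial (PairIdx n) ℂ) :=
  Matrix.of fun i j =>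
    Fin.cases (Fin.cases 0 (fun _ => 1) j)
      (fun i' => Fin.cases 1 (fun j' => Rvar i' j' ^ 2) j) i

/-- The Cayley–Menger determinant polynomial `F = det A(R)`. -/
noncomputable def Fpoly (n : ℕ) : MvPolynomial (PairIdx n) ℂ := (cmPolyMatrix n).det

/-- `∂F/∂R_{ij}` for an unordered pair `{i,j}` (junk value `0` if `i = j`). -/
noncomputable def dF {n : ℕ} (i j : Fin n) : MvPolynomial (PairIdx n) ℂ :=
  if h : i < j then MvPolynomial.pderiv (⟨(i, j), h⟩ : PairIdx n) (Fpoly n)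
  else if h' : j < i then MvPolynomial.pderiv (⟨(j, i), h'⟩ : PairIdx n) (Fpoly n) else 0

/-- `(∂F/∂R_{ij})` evaluated at `r`. -/
noncomputable def evalDF {n : ℕ} (r : PairIdx n → ℂ) (i j : Fin n) : ℂ :=
  MvPolynomial.eval r (dF i j)

/-- `r_{ij}` as a symmetric function of the coordinates indexed by ordered pairs. -/
noncomputable def rC {n : ℕ} (r : PairIdx n → ℂ) (i j : Fin n) : ℂ :=
  if h : i < j then r ⟨(i, j), h⟩ else if h' : j < i then r ⟨(j, i), h'⟩ else 0

/-- The numeric Cayley–Menger matrix `A(r²)` of the numbers `r_{ij}`. -/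
noncomputable def cmOf {n : ℕ} (r : PairIdx n → ℂ) :
    Matrix (Fin (n + 1)) (Fin (n + 1)) ℂ :=
  Matrix.of fun i j =>
    Fin.cases (Fin.cases 0 (fun _ => 1) j)
      (fun i' => Fin.cases 1 (fun j' => rC r i' j' ^ 2) j) i

/-- `Ψ^a_i` evaluated at a point (with `c2 = 2a`): for `a < 0`,
`∑_{j≠i} r_{ij}^{−2a+1} (∂F/∂R_{ij})(r) z_j`; for `a > 0`,
`∑_{j≠i} (∏_{(k,l)≠(i,j)} r_{kl}^{2a−1}) (∂F/∂R_{ij})(r) z_j`. -/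
noncomputable def Psi {n : ℕ} (c2 : ℤ) (r : PairIdx n → ℂ) (z : Fin n → ℂ) (i : Fin n) : ℂ :=
  if c2 < 0 then
    ∑ j ∈ Finset.univ \ {i}, rC r i j ^ (1 - c2).toNat * evalDF r i j * z j
  else
    ∑ j ∈ Finset.univ \ {i},
      (∏ p ∈ Finset.univ.filter
          (fun p : PairIdx n => ¬((p.1.1 = i ∧ p.1.2 = j) ∨ (p.1.1 = j ∧ p.1.2 = i))),
        r p ^ (c2 - 1).toNat) * evalDF r i j * z j

/-- The coordinates of the affine space `ℂ^{q+2n+1}`: `R`-coordinates, `Z`-coordinates,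
the coordinate `Δ`, and `M`-coordinates. -/
abbrev TVar (n : ℕ) := PairIdx n ⊕ (Fin n ⊕ (Unit ⊕ Fin n))

/-- A point of `ℂ^{q+2n+1}`. -/
abbrev Pt (n : ℕ) := TVar n → ℂ

def rPart {n : ℕ} (P : Pt n) : PairIdx n → ℂ := fun p => P (Sum.inl p)
def zPart {n : ℕ} (P : Pt n) : Fin n → ℂ := fun i => P (Sum.inr (Sum.inl i))
def dPart {n : ℕ} (P : Pt n) : ℂ := P (Sum.inr (Sum.inr (Sum.inl ())))
def mPart {n : ℕ} (P : Pt n) : Fin n → ℂ := fun i => P (Sum.inr (Sum.inr (Sum.inr i)))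

/-- `g^a_{ij}` evaluated at a point: `R_{ij}^{2a} − 1 − Z_i Z_j` if `a > 0`, and
`R_{ij}^{−2a}(Z_i Z_j + 1) − 1` if `a < 0` (with `c2 = 2a`). -/
noncomputable def gEval {n : ℕ} (c2 : ℤ) (P : Pt n) (p : PairIdx n) : ℂ :=
  if 0 < c2 then rPart P p ^ c2.toNat - 1 - zPart P p.1.1 * zPart P p.1.2
  else rPart P p ^ (-c2).toNat * (zPart P p.1.1 * zPart P p.1.2 + 1) - 1

/-- `Γ_l` evaluated at a point: `Γ_0 = ∑ M_j Z_j` and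
`Γ_l = Δ + ∑ M_j Z_j R_{jl}²` for `l = 1, …, n`. -/
noncomputable def GammaEval {n : ℕ} (P : Pt n) (l : Fin (n + 1)) : ℂ :=
  Fin.cases (∑ j, mPart P j * zPart P j)
    (fun l' => dPart P + ∑ j, mPart P j * zPart P j * rC (rPart P) j l' ^ 2) l

/-- The algebraic set `Ṽ^a`: common zero set of the `g^a_{ij}`, `F`, and the `Γ_l`. -/
noncomputable def Vtilde (n : ℕ) (c2 : ℤ) : Set (Pt n) :=
  {P | (∀ p, gEval c2 P p = 0) ∧ (cmOf (rPart P)).det = 0 ∧ ∀ l, GammaEval P l = 0}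

/-- `W_1 = {∏_{i<j} R_{ij} = 0}`. -/
noncomputable def W1 (n : ℕ) : Set (Pt n) := {P | ∏ p, rPart P p = 0}

/-- `W_2 = {F_{ij} = 0 for all 0 ≤ i, j ≤ n}` (the `(i,j)` cofactor of the Cayley–Menger
matrix is the `(j,i)` entry of its adjugate). -/
noncomputable def W2 (n : ℕ) : Set (Pt n) :=
  {P | ∀ i j : Fin (n + 1), (cmOf (rPart P)).adjugate j i = 0}

/-- `W_3^a = {Ψ^a_1 = ⋯ = Ψ^a_n = 0}`. -/
noncomputable def W3 (n : ℕ) (c2 : ℤ) : Set (Pt n) :=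
  {P | ∀ i, Psi c2 (rPart P) (zPart P) i = 0}

/-- The quasi-affine set `V^a = Ṽ^a \ (W_1 ∪ W_2 ∪ W_3^a)`. -/
noncomputable def Vset (n : ℕ) (c2 : ℤ) : Set (Pt n) :=
  Vtilde n c2 \ (W1 n ∪ W2 n ∪ W3 n c2)

/-- A subset of affine space `ℂ^σ` is Zariski-closed if it is the common zero set of a
collection of polynomials. -/
def IsZClosed {σ : Type} (S : Set (σ → ℂ)) : Prop :=
  ∃ T : Set (MvPolynomial σ ℂ), S = {x | ∀ f ∈ T, MvPolynomial.eval x f = 0}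

/-- A subset is irreducible (in the Zariski topology): it is nonempty, and whenever it is
covered by two Zariski-closed sets it is contained in one of them. (For a subset of a
quasi-affine set this coincides with irreducibility in the subspace topology.) -/
def IsIrr {σ : Type} (S : Set (σ → ℂ)) : Prop :=
  S.Nonempty ∧ ∀ C₁ C₂ : Set (σ → ℂ), IsZClosed C₁ → IsZClosed C₂ →
    S ⊆ C₁ ∪ C₂ → S ⊆ C₁ ∨ S ⊆ C₂

/-- `S` is an irreducible component of `W`: a maximal irreducible subset of `W`. -/
def IsIrrComponentOf {σ : Type} (W S : Set (σ → ℂ)) : Prop :=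
  S ⊆ W ∧ IsIrr S ∧ ∀ S' : Set (σ → ℂ), S' ⊆ W → IsIrr S' → S ⊆ S' → S' = S

/-- The dimension of `V` (with its induced Zariski topology) is at most `N`: every chain
`Z_0 ⊊ Z_1 ⊊ ⋯ ⊊ Z_d` of nonempty irreducible subsets of `V` that are closed in `V`
has length `d ≤ N`. -/
def DimLE {σ : Type} (V : Set (σ → ℂ)) (N : ℕ) : Prop :=
  ∀ (d : ℕ) (Z : Fin (d + 1) → Set (σ → ℂ)),
    StrictMono Z → (∀ i, (Z i).Nonempty) → (∀ i, IsIrr (Z i)) →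
    (∀ i, ∃ C, IsZClosed C ∧ Z i = V ∩ C) → d ≤ N

/-!
The dimension of an irreducible set is at most the transcendence degree of its function field `K`,
and `trdeg K ≤ n` as soon as some `n` elements of `K` are killed by no nonzero derivation of `K`.

Let `d` be a derivation of the function field of `V_i`. Differentiating `g^a_{ij} = 0` shows that
`dr_{ij}` is a multiple of `d(z_i z_j)`, and substituting this into `dF = 0` yields
`∑ Ψ^a_i dz_i = 0`. Since some `Ψ^a_i` is nonzero, `d` kills all `z_j` and `r_{jk}` once it kills
the `n - 1` coordinates `z_j` with `j ≠ i`. The equations `Γ_l = 0` say that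
`(Δ, m_1 z_1, …, m_n z_n)` is in the kernel of the Cayley–Menger matrix; as some cofactor is
nonzero, this vector is a multiple `κ w` of a column `w` of the adjugate matrix, whose entries are
polynomials in the `r_{ij}`. So if `d` also kills `κ`, then it kills `Δ` and every `m_j z_j`, hence
every `m_j` because `z_j ≠ 0`.
-/

section DimensionTheory

theorem ringKrullDim_le_of_isIntegral (A B : Type*) [CommRing A] [CommRing B] [Algebra A B]
    [Algebra.IsIntegral A B] : ringKrullDim B ≤ ringKrullDim A :=
  Order.krullDim_le_of_strictMono (PrimeSpectrum.comap (algebraMap A B)) fun _ _ h ↦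
    Ideal.IsIntegral.comap_lt_comap h

theorem ringKrullDim_le_of_trdeg_le {k A : Type*} [Field k] [CommRing A] [IsDomain A] [Algebra k A]
    [Algebra.FiniteType k A] {n : ℕ} (h : Algebra.trdeg k A ≤ n) : ringKrullDim A ≤ n := by
  obtain ⟨s, g, hg, hint⟩ := exists_integral_inj_algHom_of_fg k A
  have hs : s ≤ n := by
    simpa using (lift_trdeg_le_of_injective g hg).trans (Cardinal.lift_le.mpr h)
  algebraize [g.toRingHom]
  calc ringKrullDim A ≤ ringKrullDim (MvPolynomial (Fin s) k) := ringKrullDim_le_of_isIntegral _ _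
    _ = s := by simp
    _ ≤ n := by exact_mod_cast hs

open scoped IntermediateField.algebraAdjoinAdjoin in
theorem trdeg_le_card_of_derivation_eq_zero {k K ι : Type*} [Field k] [Field K] [Algebra k K]
    [Algebra.EssFiniteType k K] [Fintype ι] (b : ι → K)
    (hb : ∀ D : Derivation k K K, (∀ i, D (b i) = 0) → D = 0) :
    Algebra.trdeg k K ≤ Fintype.card ι := by
  let L := IntermediateField.adjoin k (Set.range b)
  have hL : ∀ y, KaehlerDifferential.D L K y = 0 := fun y ↦
    (Module.forall_dual_apply_eq_zero_iff K _).mp fun φ ↦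
      DFunLike.congr_fun (hb ((φ.compDer (KaehlerDifferential.D L K)).restrictScalars k) fun i ↦
        Derivation.map_algebraMap _ (⟨b i, IntermediateField.subset_adjoin k _ ⟨i, rfl⟩⟩ : L)) y
  have : Algebra.FormallyUnramified L K := by
    refine ⟨(Submodule.subsingleton_iff K).mp (subsingleton_of_bot_eq_top ?_)⟩
    rw [← KaehlerDifferential.span_range_derivation, eq_comm, Submodule.span_eq_bot]
    exact Set.forall_mem_range.mpr hL
  have := Algebra.EssFiniteType.of_comp k L K
  have := Algebra.FormallyUnramified.isSeparable L K
  have : Algebra.IsAlgebraic (Algebra.adjoin k (Set.range b)) K := .trans _ L _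
  simpa using (Cardinal.lift_le.mpr
    (Algebra.IsAlgebraic.trdeg_le_cardinalMk k (Set.range b))).trans Cardinal.mk_range_le_lift

end DimensionTheory

section Derivations

theorem derivation_eq_zero_of_isFractionRing {R A K M : Type*} [CommRing R] [CommRing A] [Field K]
    [Algebra R K] [Algebra A K] [IsFractionRing A K] [AddCommGroup M] [Module K M] [Module R M]
    {D : Derivation R K M} (h : ∀ a : A, D (algebraMap A K a) = 0) : D = 0 := by
  ext x
  obtain ⟨a, b, -, rfl⟩ := IsFractionRing.div_surjective (A := A) x
  simp [Derivation.leibniz_div, h]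

theorem derivation_aeval {R A M σ : Type*} [CommRing R] [CommRing A] [Algebra R A] [AddCommGroup M]
    [Module A M] [Module R M] [IsScalarTower R A M] [Fintype σ] (D : Derivation R A M) (x : σ → A)
    (f : MvPolynomial σ R) :
    D (MvPolynomial.aeval x f) =
      ∑ i, MvPolynomial.aeval x (MvPolynomial.pderiv i f) • D (x i) := by
  classical
  induction f using MvPolynomial.induction_on with
  | C a => simp
  | add f g hf hg => simp only [map_add, hf, hg, add_smul, Finset.sum_add_distrib]
  | mul_X f i hf =>
    simp [hf, MvPolynomial.pderiv_X, add_smul, Finset.sum_add_distrib, Pi.single_apply, mul_smul,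
      Finset.smul_sum, apply_ite, ite_smul]

theorem pow_succ_mul_derivation_eq {R A : Type*} [CommRing R] [CommRing A] [Algebra R A]
    (D : Derivation R A A) {r w : A} {e : ℕ} (h : r ^ e * (w + 1) = 1) :
    r ^ (e + 1) * D w = -e * D r := by
  have hD := congrArg D h
  simp only [Derivation.leibniz, Derivation.leibniz_pow, map_add, Derivation.map_one_eq_zero,
    add_zero, smul_eq_mul, nsmul_eq_mul] at hD
  obtain _ | e := e
  · simp_all
  · simp only [Nat.add_sub_cancel] at hD
    linear_combination r * hD - (e + 1 : ℕ) * D r * h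

end Derivations

open Matrix in
theorem mul_adjugate_eq_of_mulVec_eq_zero {m R : Type*} [Fintype m] [DecidableEq m] [CommRing R]
    {A : Matrix m m R} {v : m → R} (hv : A *ᵥ v = 0) (i j k : m) :
    v j * A.adjugate k i = v k * A.adjugate j i := by
  set B := A.updateRow i (Pi.single k 1)
  have hBv : B *ᵥ v = Pi.single i (v k) := by
    ext l
    obtain rfl | hl := eq_or_ne l i
    · simp [B, mulVec]
    · simpa [B, mulVec, hl] using congrFun hv l
  have hBadj : B.det * v j = B.adjugate j i * v k := by
    simpa [adjugate_mul, smul_mulVec] using congrFun (congrArg B.adjugate.mulVec hBv) j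
  have hadj : B.adjugate j i = A.adjugate j i := by simp [B, adjugate_apply]
  rw [adjugate_apply A k i, mul_comm, hBadj, hadj, mul_comm]

section Zariski

open MvPolynomial

variable {σ : Type}

theorem IsIrr.isPrime_vanishingIdeal {S : Set (σ → ℂ)} (hS : IsIrr S) :
    (vanishingIdeal ℂ S).IsPrime := by
  have isZClosed_zeros (f : MvPolynomial σ ℂ) : IsZClosed {x | eval x f = 0} := ⟨{f}, by simp⟩
  obtain ⟨⟨P, hP⟩, hirr⟩ := hS
  refine ⟨(Ideal.ne_top_iff_one _).mpr fun h ↦ ?_, fun {f g} hfg ↦ ?_⟩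
  · simpa using h P hP
  · exact hirr _ _ (isZClosed_zeros f) (isZClosed_zeros g) fun P hP ↦
      mul_eq_zero.mp (by simpa using hfg P hP)

theorem vanishingIdeal_lt_vanishingIdeal {V C S T : Set (σ → ℂ)} (hC : IsZClosed C)
    (hS : S = V ∩ C) (hTV : T ⊆ V) (hST : S ⊂ T) : vanishingIdeal ℂ T < vanishingIdeal ℂ S := by
  refine lt_of_le_not_ge (vanishingIdeal_anti_mono hST.subset) fun hle ↦ hST.not_subset ?_
  obtain ⟨E, rfl⟩ := hC
  rw [hS] at hle ⊢
  refine fun P hP ↦ ⟨hTV hP, fun f hf ↦ ?_⟩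
  exact hle (mem_vanishingIdeal_iff.mpr fun Q hQ ↦ hQ.2 f hf) P hP

theorem dimLE_of_ringKrullDim_le {S : Set (σ → ℂ)} {N : ℕ}
    (h : ringKrullDim (MvPolynomial σ ℂ ⧸ vanishingIdeal ℂ S) ≤ N) : DimLE S N := by
  intro d Z hZ _ hirr hclosed
  have hsub (i) : Z i ⊆ S := by
    obtain ⟨C, -, hC⟩ := hclosed i
    exact hC.trans_subset Set.inter_subset_left
  let p (i : Fin (d + 1)) : PrimeSpectrum.zeroLocus (R := MvPolynomial σ ℂ) (vanishingIdeal ℂ S) :=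
    ⟨⟨vanishingIdeal ℂ (Z i.rev), (hirr _).isPrime_vanishingIdeal⟩,
      vanishingIdeal_anti_mono (hsub _)⟩
  have hp : StrictMono p := fun i j hij ↦ by
    obtain ⟨C, hC, hZC⟩ := hclosed j.rev
    exact vanishingIdeal_lt_vanishingIdeal hC hZC (hsub _) (hZ (Fin.rev_lt_rev.mpr hij))
  rw [ringKrullDim_quotient] at h
  exact_mod_cast (Order.LTSeries.length_le_krullDim (.mk d p hp)).trans h

/-- A `K`-valued point `x` is generic for `S` if the polynomials vanishing at `x` are exactly those
vanishing on `S`. -/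
def IsZariskiGeneric {K : Type*} [Field K] [Algebra ℂ K] (S : Set (σ → ℂ)) (x : σ → K) : Prop :=
  ∀ f : MvPolynomial σ ℂ, aeval x f = 0 ↔ ∀ P ∈ S, aeval P f = 0

theorem IsIrr.dimLE_of_forall_isZariskiGeneric [Finite σ] {S : Set (σ → ℂ)} (hS : IsIrr S) {N : ℕ}
    (h : ∀ {K : Type} [Field K] [Algebra ℂ K] (x : σ → K), IsZariskiGeneric S x →
      ∃ b : Fin N → K, ∀ D : Derivation ℂ K K, (∀ i, D (b i) = 0) → ∀ t, D (x t) = 0) :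
    DimLE S N := by
  cases nonempty_fintype σ
  have := hS.isPrime_vanishingIdeal
  let A := MvPolynomial σ ℂ ⧸ vanishingIdeal ℂ S
  let K := FractionRing A
  let x (t : σ) : K := algebraMap A K (Ideal.Quotient.mk _ (X t))
  have aeval_x (f) : aeval x f = algebraMap A K (Ideal.Quotient.mk _ f) :=
    DFunLike.congr_fun (algHom_ext (f := aeval x) (g := (IsScalarTower.toAlgHom ℂ A K).comp
      (Ideal.Quotient.mkₐ ℂ (vanishingIdeal ℂ S))) (aeval_X x)) f
  have hx : IsZariskiGeneric S x := fun f ↦ by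
    rw [aeval_x, map_eq_zero_iff _ (IsFractionRing.injective A K), Ideal.Quotient.eq_zero_iff_mem,
      mem_vanishingIdeal_iff]
  obtain ⟨b, hb⟩ := h x hx
  have hK : Algebra.trdeg ℂ K ≤ N := by
    have := Algebra.EssFiniteType.comp ℂ A K
    simpa using trdeg_le_card_of_derivation_eq_zero (k := ℂ) b fun D hD ↦
      derivation_eq_zero_of_isFractionRing (A := A) fun a ↦ by
        obtain ⟨f, rfl⟩ := Ideal.Quotient.mk_surjective a
        simp [← aeval_x, derivation_aeval, hb D hD]
  exact dimLE_of_ringKrullDim_le <| ringKrullDim_le_of_trdeg_le (k := ℂ) <|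
    (trdeg_le_of_injective (IsScalarTower.toAlgHom ℂ A K) (IsFractionRing.injective A K)).trans hK

end Zariski

section Polynomials

open MvPolynomial Matrix

variable {n : ℕ}

/-- The polynomial `g^a_{ij}` with `c2 = 2a`. -/
noncomputable def gPoly (c2 : ℤ) (p : PairIdx n) : MvPolynomial (TVar n) ℂ :=
  let ZZ := X (.inr (.inl p.1.1)) * X (.inr (.inl p.1.2))
  if 0 < c2 then X (.inl p) ^ c2.toNat - 1 - ZZ else X (.inl p) ^ (-c2).toNat * (ZZ + 1) - 1

/-- The Cayley–Menger matrix over the polynomial ring in all the variables. -/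
noncomputable def cmMatrix (n : ℕ) : Matrix (Fin (n + 1)) (Fin (n + 1)) (MvPolynomial (TVar n) ℂ) :=
  (rename Sum.inl).mapMatrix (cmPolyMatrix n)

/-- The vector `(Δ, M_1 Z_1, …, M_n Z_n)`, whose image under the Cayley–Menger matrix is
`(Γ_0, …, Γ_n)`. -/
noncomputable def gammaVec (n : ℕ) : Fin (n + 1) → MvPolynomial (TVar n) ℂ :=
  Fin.cons (X (.inr (.inr (.inl ())))) fun j ↦ X (.inr (.inr (.inr j))) * X (.inr (.inl j))

/-- The coefficient of `(∂F/∂R_{ij}) Z_j` in `Ψ^a_i`, with `c2 = 2a`. -/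
noncomputable def psiCoeff (c2 : ℤ) (i j : Fin n) : MvPolynomial (PairIdx n) ℂ :=
  if c2 < 0 then Rvar i j ^ (1 - c2).toNat
  else ∏ p : PairIdx n with ¬((p.1.1 = i ∧ p.1.2 = j) ∨ (p.1.1 = j ∧ p.1.2 = i)),
    X p ^ (c2 - 1).toNat

/-- The polynomial `Ψ^a_i` with `c2 = 2a`. -/
noncomputable def psiPoly (c2 : ℤ) (i : Fin n) : MvPolynomial (TVar n) ℂ :=
  ∑ j ∈ Finset.univ \ {i}, rename .inl (psiCoeff c2 i j * dF i j) * X (.inr (.inl j))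

theorem dF_comm (i j : Fin n) : dF i j = dF j i := by
  obtain h | rfl | h := lt_trichotomy i j <;> simp [dF, *, not_lt_of_gt]

theorem Rvar_comm (i j : Fin n) : Rvar i j = Rvar j i := by
  obtain h | rfl | h := lt_trichotomy i j <;> simp [Rvar, *, not_lt_of_gt]

theorem psiCoeff_comm (c2 : ℤ) (i j : Fin n) : psiCoeff c2 i j = psiCoeff c2 j i := by
  simp only [psiCoeff, Rvar_comm i j, or_comm]

theorem psiCoeff_of_neg {c2 : ℤ} (hc2 : c2 < 0) (p : PairIdx n) :
    psiCoeff c2 p.1.1 p.1.2 = X p ^ ((-c2).toNat + 1) := by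
  rw [psiCoeff, if_pos hc2, Rvar, dif_pos p.2]
  congr 1
  omega

theorem psiCoeff_mul_of_pos {c2 : ℤ} (hc2 : 0 < c2) (p : PairIdx n) :
    psiCoeff c2 p.1.1 p.1.2 * X p ^ (c2.toNat - 1) = ∏ q : PairIdx n, X q ^ (c2.toNat - 1) := by
  have filter_eq : ({q : PairIdx n | ¬((q.1.1 = p.1.1 ∧ q.1.2 = p.1.2) ∨
      (q.1.1 = p.1.2 ∧ q.1.2 = p.1.1))} : Finset _) = Finset.univ.erase p := by
    ext q
    have := q.2
    have := p.2
    grind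
  have toNat_eq : (c2 - 1).toNat = c2.toNat - 1 := by omega
  rw [psiCoeff, if_neg hc2.not_gt, filter_eq, toNat_eq,
    Finset.prod_erase_mul _ _ (Finset.mem_univ p)]

theorem eval_Rvar (r : PairIdx n → ℂ) (i j : Fin n) : eval r (Rvar i j) = rC r i j := by
  simp only [Rvar, rC]
  split_ifs <;> simp

theorem map_cmMatrix (P : Pt n) : (aeval P).mapMatrix (cmMatrix n) = cmOf (rPart P) := by
  have hr : P ∘ Sum.inl = rPart P := rfl
  ext i j
  cases i using Fin.cases <;> cases j using Fin.cases <;>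
    simp [cmMatrix, cmPolyMatrix, cmOf, eval_rename, eval_Rvar, hr]

theorem det_cmMatrix : (cmMatrix n).det = rename Sum.inl (Fpoly n) :=
  (AlgHom.map_det _ _).symm

theorem adjugate_cmMatrix (i j : Fin (n + 1)) :
    (cmMatrix n).adjugate i j = rename Sum.inl ((cmPolyMatrix n).adjugate i j) :=
  (congrFun₂ (AlgHom.map_adjugate _ _) i j).symm

theorem eval_gPoly (c2 : ℤ) (P : Pt n) (p : PairIdx n) : eval P (gPoly c2 p) = gEval c2 P p := by
  simp only [gPoly, gEval]
  split_ifs <;> simp [rPart, zPart]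

theorem cmOf_mulVec_gammaVec (P : Pt n) :
    cmOf (rPart P) *ᵥ (aeval P ∘ gammaVec n) = GammaEval P := by
  have rC_comm (i j : Fin n) : rC (rPart P) i j = rC (rPart P) j i := by
    simp only [← eval_Rvar, Rvar_comm i j]
  ext l
  cases l using Fin.cases with
  | zero => simp [mulVec, dotProduct, Fin.sum_univ_succ, gammaVec, cmOf, GammaEval, mPart, zPart]
  | succ l =>
    simp [mulVec, dotProduct, Fin.sum_univ_succ, gammaVec, cmOf, GammaEval, mPart, zPart, dPart,
      rC_comm l, mul_comm]

theorem eval_psiPoly (c2 : ℤ) (P : Pt n) (i : Fin n) :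
    eval P (psiPoly c2 i) = Psi c2 (rPart P) (zPart P) i := by
  have hr : P ∘ Sum.inl = rPart P := rfl
  simp only [psiPoly, Psi, psiCoeff, map_sum, map_mul, eval_rename, eval_X, evalDF, hr]
  split_ifs
  · simp only [map_pow, eval_Rvar, zPart]
  · simp only [map_prod, map_pow, eval_X, zPart]

theorem sum_pairIdx_add_swap {M : Type*} [AddCommMonoid M] (f : Fin n → Fin n → M) :
    ∑ p : PairIdx n, (f p.1.1 p.1.2 + f p.1.2 p.1.1) = ∑ i, ∑ j ∈ Finset.univ \ {i}, f i j := by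
  simp only [← Finset.compl_eq_univ_sdiff]
  rw [← Finset.sum_sum_Ioi_add_eq_sum_sum_off_diag fun j i ↦ f i j]
  refine (Finset.sum_subtype ({p | p.1 < p.2} : Finset (Fin n × Fin n)) (by simp) fun p ↦
    f p.1 p.2 + f p.2 p.1).symm.trans ?_
  simp only [Finset.sum_filter, Fintype.sum_prod_type]
  simp only [← Finset.sum_filter, Finset.filter_lt_eq_Ioi]

/-- A point of `K^{q+2n+1}` satisfying the equations and inequations that define `V^a`. -/
structure IsPointOfV {K : Type*} [Field K] [Algebra ℂ K] (c2 : ℤ) (x : TVar n → K) : Prop where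
  gPoly_eq_zero (p : PairIdx n) : aeval x (gPoly c2 p) = 0
  det_eq_zero : aeval x (cmMatrix n).det = 0
  mulVec_eq_zero (l : Fin (n + 1)) : aeval x ((cmMatrix n *ᵥ gammaVec n) l) = 0
  r_ne_zero (p : PairIdx n) : x (.inl p) ≠ 0
  exists_adjugate_ne_zero : ∃ i j, aeval x ((cmMatrix n).adjugate i j) ≠ 0
  exists_psiPoly_ne_zero : ∃ i, aeval x (psiPoly c2 i) ≠ 0

theorem isPointOfV_of_mem_Vset {c2 : ℤ} {P : Pt n} (hP : P ∈ Vset n c2) : IsPointOfV c2 P := by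
  obtain ⟨⟨hg, hF, hΓ⟩, hW⟩ := hP
  obtain ⟨⟨h₁, h₂⟩, h₃⟩ : (¬∏ p, rPart P p = 0 ∧
    ¬∀ i j, (cmOf (rPart P)).adjugate j i = 0) ∧ ¬∀ i, Psi c2 (rPart P) (zPart P) i = 0 :=
    (not_or.mp hW).imp_left not_or.mp
  push Not at h₂ h₃
  obtain ⟨i, j, h₂⟩ := h₂
  obtain ⟨k, h₃⟩ := h₃
  exact {
    gPoly_eq_zero p := (eval_gPoly c2 P p).trans (hg p)
    det_eq_zero := by rw [AlgHom.map_det, map_cmMatrix, hF]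
    mulVec_eq_zero l := by
      rw [← hΓ l, ← cmOf_mulVec_gammaVec, ← map_cmMatrix]
      exact (aeval P).toRingHom.map_mulVec _ _ _
    r_ne_zero p := Finset.prod_ne_zero_iff.mp h₁ p (Finset.mem_univ p)
    exists_adjugate_ne_zero := ⟨j, i, by
      rwa [← map_cmMatrix, ← AlgHom.map_adjugate] at h₂⟩
    exists_psiPoly_ne_zero := ⟨k, by rwa [← eval_psiPoly] at h₃⟩ }

theorem IsZariskiGeneric.isPointOfV {K : Type*} [Field K] [Algebra ℂ K] {c2 : ℤ} {S : Set (Pt n)}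
    {x : TVar n → K} (hx : IsZariskiGeneric S x) (hS : S.Nonempty) (hSV : S ⊆ Vset n c2) :
    IsPointOfV c2 x := by
  have hV {P} (hP : P ∈ S) := isPointOfV_of_mem_Vset (hSV hP)
  have aeval_ne_zero {P} (hP : P ∈ S) {f} (hf : aeval P f ≠ 0) : aeval x f ≠ 0 :=
    fun h ↦ hf ((hx f).mp h P hP)
  obtain ⟨P, hP⟩ := hS
  obtain ⟨i, j, hij⟩ := (hV hP).exists_adjugate_ne_zero
  obtain ⟨k, hk⟩ := (hV hP).exists_psiPoly_ne_zero
  exact {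
    gPoly_eq_zero p := (hx _).mpr fun Q hQ ↦ (hV hQ).gPoly_eq_zero p
    det_eq_zero := (hx _).mpr fun Q hQ ↦ (hV hQ).det_eq_zero
    mulVec_eq_zero l := (hx _).mpr fun Q hQ ↦ (hV hQ).mulVec_eq_zero l
    r_ne_zero p := by
      simpa using aeval_ne_zero hP (f := X (.inl p)) (by simpa using (hV hP).r_ne_zero p)
    exists_adjugate_ne_zero := ⟨i, j, aeval_ne_zero hP hij⟩
    exists_psiPoly_ne_zero := ⟨k, aeval_ne_zero hP hk⟩ }

variable {K : Type*} [Field K] [Algebra ℂ K] {c2 : ℤ} {x : TVar n → K} (D : Derivation ℂ K K)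

theorem IsPointOfV.mul_derivation_r_eq_of_neg (hx : IsPointOfV c2 x) (hc2 : c2 < 0)
    (p : PairIdx n) :
    -((-c2).toNat : K) * D (x (.inl p)) =
      aeval x (rename Sum.inl (psiCoeff c2 p.1.1 p.1.2)) *
        D (x (.inr (.inl p.1.1)) * x (.inr (.inl p.1.2))) := by
  have hg := hx.gPoly_eq_zero p
  simp only [gPoly, if_neg hc2.not_gt, map_sub, map_mul, map_pow, map_add, map_one, aeval_X,
    sub_eq_zero] at hg
  rw [← pow_succ_mul_derivation_eq D hg, psiCoeff_of_neg hc2, map_pow, rename_X, map_pow, aeval_X]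

theorem IsPointOfV.mul_derivation_r_eq_of_pos (hx : IsPointOfV c2 x) (hc2 : 0 < c2)
    (p : PairIdx n) :
    (c2.toNat * ∏ q : PairIdx n, x (.inl q) ^ (c2.toNat - 1)) * D (x (.inl p)) =
      aeval x (rename Sum.inl (psiCoeff c2 p.1.1 p.1.2)) *
        D (x (.inr (.inl p.1.1)) * x (.inr (.inl p.1.2))) := by
  have hg := hx.gPoly_eq_zero p
  simp only [gPoly, if_pos hc2, map_sub, map_mul, map_pow, map_one, aeval_X] at hg
  have hD : c2.toNat * x (.inl p) ^ (c2.toNat - 1) * D (x (.inl p)) =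
      D (x (.inr (.inl p.1.1)) * x (.inr (.inl p.1.2))) := by
    rw [← sub_eq_zero.mp hg]
    simp [mul_assoc]
  have hprod := congrArg (aeval x ∘ rename Sum.inl) (psiCoeff_mul_of_pos hc2 p)
  simp only [Function.comp_apply, map_mul, map_pow, map_prod, rename_X, aeval_X] at hprod
  rw [← hprod, ← hD]
  ring

theorem IsPointOfV.exists_mul_derivation_r_eq (hx : IsPointOfV c2 x) (hc2 : c2 ≠ 0) :
    ∃ L : K, L ≠ 0 ∧ ∀ p : PairIdx n, L * D (x (.inl p)) =
      aeval x (rename Sum.inl (psiCoeff c2 p.1.1 p.1.2)) *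
        D (x (.inr (.inl p.1.1)) * x (.inr (.inl p.1.2))) := by
  have : CharZero K := charZero_of_injective_algebraMap (algebraMap ℂ K).injective
  obtain hc2 | hc2 := hc2.lt_or_gt
  · exact ⟨_, neg_ne_zero.mpr <| Nat.cast_ne_zero.mpr (by omega),
      hx.mul_derivation_r_eq_of_neg D hc2⟩
  · exact ⟨_, mul_ne_zero (Nat.cast_ne_zero.mpr (by omega)) <|
      Finset.prod_ne_zero_iff.mpr fun p _ ↦ pow_ne_zero _ (hx.r_ne_zero p),
      hx.mul_derivation_r_eq_of_pos D hc2⟩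

theorem IsPointOfV.sum_dF_mul_derivation_eq_zero (hx : IsPointOfV c2 x) :
    ∑ p : PairIdx n, aeval x (rename Sum.inl (dF p.1.1 p.1.2)) * D (x (.inl p)) = 0 := by
  have h := congrArg D hx.det_eq_zero
  rw [det_cmMatrix, aeval_rename, derivation_aeval, map_zero] at h
  have dF_pairIdx (p : PairIdx n) : dF p.1.1 p.1.2 = pderiv p (Fpoly n) := dif_pos p.2
  simpa [aeval_rename, dF_pairIdx] using h

theorem IsPointOfV.sum_psiPoly_mul_derivation_eq_zero (hx : IsPointOfV c2 x) (hc2 : c2 ≠ 0) :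
    ∑ i, aeval x (psiPoly c2 i) * D (x (.inr (.inl i))) = 0 := by
  obtain ⟨L, -, hL⟩ := hx.exists_mul_derivation_r_eq D hc2
  let w (i j : Fin n) : K := aeval x (rename Sum.inl (psiCoeff c2 i j * dF i j))
  have w_comm (i j) : w i j = w j i := by simp only [w, psiCoeff_comm c2 i j, dF_comm i j]
  let z (i : Fin n) : K := x (.inr (.inl i))
  calc ∑ i, aeval x (psiPoly c2 i) * D (z i)
      = ∑ i, ∑ j ∈ Finset.univ \ {i}, w i j * z j * D (z i) := by
        simp only [psiPoly, map_sum, map_mul, aeval_X, Finset.sum_mul, w, z]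
    _ = ∑ p : PairIdx n, w p.1.1 p.1.2 * D (z p.1.1 * z p.1.2) := by
        rw [← sum_pairIdx_add_swap]
        refine Finset.sum_congr rfl fun p _ ↦ ?_
        rw [w_comm p.1.2, Derivation.leibniz, smul_eq_mul, smul_eq_mul]
        ring
    _ = L * ∑ p : PairIdx n, aeval x (rename Sum.inl (dF p.1.1 p.1.2)) * D (x (.inl p)) := by
        rw [Finset.mul_sum]
        refine Finset.sum_congr rfl fun p _ ↦ ?_
        simp only [w, map_mul]
        linear_combination -aeval x (rename Sum.inl (dF p.1.1 p.1.2)) * hL p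
    _ = 0 := by rw [hx.sum_dF_mul_derivation_eq_zero D, mul_zero]

theorem IsPointOfV.derivation_r_eq_zero (hx : IsPointOfV c2 x) (hc2 : c2 ≠ 0)
    (hz : ∀ i, D (x (.inr (.inl i))) = 0) (p : PairIdx n) : D (x (.inl p)) = 0 := by
  obtain ⟨L, hL₀, hL⟩ := hx.exists_mul_derivation_r_eq D hc2
  simpa [hz, hL₀] using hL p

theorem derivation_aeval_rename_inl_eq_zero (hr : ∀ p : PairIdx n, D (x (.inl p)) = 0)
    (f : MvPolynomial (PairIdx n) ℂ) : D (aeval x (rename Sum.inl f)) = 0 := by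
  simp [aeval_rename, derivation_aeval, hr]

theorem IsPointOfV.gammaVec_mul_adjugate (hx : IsPointOfV c2 x) (i j k : Fin (n + 1)) :
    aeval x (gammaVec n j) * aeval x ((cmMatrix n).adjugate k i) =
      aeval x (gammaVec n k) * aeval x ((cmMatrix n).adjugate j i) := by
  have hker : (aeval x).mapMatrix (cmMatrix n) *ᵥ (aeval x ∘ gammaVec n) = 0 := by
    ext l
    exact ((aeval x).toRingHom.map_mulVec _ _ _).symm.trans (hx.mulVec_eq_zero l)
  have := mul_adjugate_eq_of_mulVec_eq_zero hker i j k
  rwa [← AlgHom.map_adjugate] at this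

theorem IsPointOfV.derivation_z_eq_zero (hx : IsPointOfV c2 x) (hc2 : c2 ≠ 0) {i : Fin n}
    (hi : aeval x (psiPoly c2 i) ≠ 0) (hz : ∀ j ≠ i, D (x (.inr (.inl j))) = 0) (j : Fin n) :
    D (x (.inr (.inl j))) = 0 := by
  obtain rfl | hj := eq_or_ne j i
  · have hsum := hx.sum_psiPoly_mul_derivation_eq_zero D hc2
    rw [Finset.sum_eq_single j (fun k _ hk ↦ mul_eq_zero_of_right _ (hz k hk)) (by simp)] at hsum
    exact (mul_eq_zero.mp hsum).resolve_left hi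
  · exact hz j hj

theorem IsPointOfV.exists_forall_derivation_eq_zero (hx : IsPointOfV c2 x) (hc2 : c2 ≠ 0)
    (hz : ∀ k, x (.inr (.inl k)) ≠ 0) :
    ∃ b : Fin n → K, ∀ D : Derivation ℂ K K, (∀ i, D (b i) = 0) → ∀ t, D (x t) = 0 := by
  obtain ⟨k, l, hkl⟩ := hx.exists_adjugate_ne_zero
  obtain ⟨i, hi⟩ := hx.exists_psiPoly_ne_zero
  let κ : K := aeval x (gammaVec n k) / aeval x ((cmMatrix n).adjugate k l)
  refine ⟨Function.update (fun j ↦ x (.inr (.inl j))) i κ, fun D hD ↦ ?_⟩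
  have hDκ : D κ = 0 := by simpa using hD i
  have hDz := hx.derivation_z_eq_zero D hc2 hi fun j hj ↦ by simpa [hj] using hD j
  have hDr := hx.derivation_r_eq_zero D hc2 hDz
  have hDv (j) : D (aeval x (gammaVec n j)) = 0 := by
    have hv : aeval x (gammaVec n j) = κ * aeval x ((cmMatrix n).adjugate j l) := by
      rw [div_mul_eq_mul_div, eq_div_iff hkl, hx.gammaVec_mul_adjugate]
    rw [hv, Derivation.leibniz, hDκ, adjugate_cmMatrix, derivation_aeval_rename_inl_eq_zero D hDr,
      smul_zero, smul_zero, add_zero]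
  rintro (p | j | _ | j)
  · exact hDr p
  · exact hDz j
  · simpa [gammaVec] using hDv 0
  · simpa [gammaVec, hz, hDz] using hDv j.succ

end Polynomials

theorem statement15_general {n : ℕ} {c2 : ℤ} (hc2 : c2 ≠ 0) {S : Set (Pt n)} (hS : IsIrr S)
    (hSV : S ⊆ Vset n c2) (hD : ∀ k : Fin n, ¬ S ⊆ {P | zPart P k = 0}) : DimLE S n := by
  refine hS.dimLE_of_forall_isZariskiGeneric fun x hx ↦ ?_
  have hz (k : Fin n) : x (.inr (.inl k)) ≠ 0 := fun hk ↦ hD k fun P hP ↦ by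
    have := (hx (MvPolynomial.X (.inr (.inl k)))).mp (by simpa using hk) P hP
    rwa [MvPolynomial.aeval_X] at this
  exact (hx.isPointOfV hS.1 hSV).exists_forall_derivation_eq_zero hc2 hz

/-- Let `a` be a nonzero semi-integer (`c2 = 2a`) and let `V_i` be an
irreducible component of `V^a` that is not contained in any
`D_k = {P ∈ V^a : z_k = 0}`. Then `V_i` has dimension at most `n`. -/
theorem statement15 {n : ℕ} (hn : 3 ≤ n) (c2 : ℤ) (hc2 : c2 ≠ 0)
    (Vi : Set (Pt n)) (hcomp : IsIrrComponentOf (Vset n c2) Vi)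
    (hD : ∀ k : Fin n, ¬ Vi ⊆ {P ∈ Vset n c2 | zPart P k = 0}) :
    DimLE Vi n :=
  statement15_general hc2 hcomp.2.1 hcomp.1 fun k h ↦
    hD k fun _ hP ↦ ⟨hcomp.1 hP, h hP⟩
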